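/- arXiv:1602.01561 — 4 statements merged into one kernel-verified Lean document; each statement's English description precedes it below -/
import Mathlib

section
/- Let n ≥ 1 and suppose ψ is a geometric mean labeling of the star S_n, and let c = ψ(center) be the label of the center vertex. Then ⌈√(c·(n+1))⌉ − ⌊√c⌋ + 1 ≥ n. -/
/-!
Every edge label lies between `⌊√c⌋` and `⌈√(c (n + 1))⌉`, because every vertex label lies between
`1` and `n + 1` and both roundings of the square root are monotone (`Nat.sqrt_le_sqrt`,
`ceilSqrt_mono`). The star has `n` edges (`ncard_edgeSet_starG`), so both `1` and `n` are edge
labels. Hence `⌊√c⌋ ≤ 1` and `n ≤ ⌈√(c (n + 1))⌉`, and the difference is at least `n - 1`.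
-/

/-- The ceiling of the square root of a natural number. -/
def ceilSqrt (n : ℕ) : ℕ :=
  if Nat.sqrt n * Nat.sqrt n = n then Nat.sqrt n else Nat.sqrt n + 1

/-- `ψ` is a `k`-geometric mean labeling of the graph `G`: an injection of the vertices into
`{k, …, k + q}` (where `q` is the number of edges of `G`) such that each edge `uv` can be
assigned the label `⌊√(ψ u * ψ v)⌋` or `⌈√(ψ u * ψ v)⌉` (the choice may vary from edge to
edge) so that the resulting set of edge labels is exactly `{k, …, k + q - 1}`. -/
def IsKGeometricMeanLabeling {V : Type*} (G : SimpleGraph V) (k : ℕ) (ψ : V → ℕ) : Prop :=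
  Function.Injective ψ ∧
  (∀ v : V, ψ v ∈ Set.Icc k (k + G.edgeSet.ncard)) ∧
  ∃ L : Sym2 V → ℕ,
    (∀ u v : V, G.Adj u v →
      L s(u, v) = Nat.sqrt (ψ u * ψ v) ∨ L s(u, v) = ceilSqrt (ψ u * ψ v)) ∧
    L '' G.edgeSet = Set.Icc k (k + G.edgeSet.ncard - 1)

/-- `G` is a `k`-geometric mean graph: it admits a `k`-geometric mean labeling.
A geometric mean graph is a `1`-geometric mean graph. -/
def IsKGeometricMeanGraph {V : Type*} (G : SimpleGraph V) (k : ℕ) : Prop :=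
  ∃ ψ : V → ℕ, IsKGeometricMeanLabeling G k ψ

/-- The star `S n` on `n + 1` vertices: the vertex `0` is the center, joined to the `n` leaves. -/
def starG (n : ℕ) : SimpleGraph (Fin (n + 1)) :=
  SimpleGraph.fromRel (fun u _ => u = 0)

lemma sqrt_le_ceilSqrt (a : ℕ) : Nat.sqrt a ≤ ceilSqrt a := by
  unfold ceilSqrt; split_ifs <;> omega

/-- The universal property of the ceiling: `⌈√a⌉ ≤ b` iff `a ≤ b²`. -/
lemma ceilSqrt_le_iff (a b : ℕ) : ceilSqrt a ≤ b ↔ a ≤ b * b := by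
  unfold ceilSqrt
  have h1 := Nat.sqrt_le a
  have h2 := Nat.lt_succ_sqrt a
  split_ifs with h
  · constructor
    · intro hb
      calc a = _ := h.symm
        _ ≤ b * b := Nat.mul_le_mul hb hb
    · intro hb
      by_contra! hlt
      have := Nat.mul_self_lt_mul_self hlt
      omega
  · constructor
    · intro hb
      exact h2.le.trans (Nat.mul_le_mul hb hb)
    · intro hb
      by_contra! hlt
      have := Nat.mul_le_mul (Nat.le_of_lt_succ hlt) (Nat.le_of_lt_succ hlt)
      omega

lemma ceilSqrt_mono {a b : ℕ} (h : a ≤ b) : ceilSqrt a ≤ ceilSqrt b :=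
  (ceilSqrt_le_iff _ _).2 (h.trans ((ceilSqrt_le_iff _ _).1 le_rfl))

lemma edgeSet_starG (n : ℕ) :
    (starG n).edgeSet = (fun i : Fin n => s(0, i.succ)) '' Set.univ := by
  ext e
  induction e with | _ u v
  simp only [SimpleGraph.mem_edgeSet, starG, SimpleGraph.fromRel_adj, Set.image_univ,
    Set.mem_range, Sym2.eq_iff]
  constructor
  · rintro ⟨hne, rfl | rfl⟩
    · obtain ⟨i, rfl⟩ := Fin.exists_succ_eq.2 hne.symm
      exact ⟨i, Or.inl ⟨rfl, rfl⟩⟩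
    · obtain ⟨i, rfl⟩ := Fin.exists_succ_eq.2 hne
      exact ⟨i, Or.inr ⟨rfl, rfl⟩⟩
  · rintro ⟨i, ⟨rfl, rfl⟩ | ⟨rfl, rfl⟩⟩
    · exact ⟨(Fin.succ_ne_zero i).symm, Or.inl rfl⟩
    · exact ⟨Fin.succ_ne_zero i, Or.inr rfl⟩

lemma ncard_edgeSet_starG (n : ℕ) : (starG n).edgeSet.ncard = n := by
  rw [edgeSet_starG, Set.ncard_image_of_injective, Set.ncard_univ, Nat.card_fin]
  intro i j h
  simpa using h

/-- If `ψ` is a geometric mean labeling of the star `S n` (`n ≥ 1`) and `c = ψ 0` is the label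
of the center, then `⌈√(c (n+1))⌉ - ⌊√c⌋ + 1 ≥ n`. -/
theorem statement4 (n : ℕ) (hn : 1 ≤ n) (ψ : Fin (n + 1) → ℕ)
    (hψ : IsKGeometricMeanLabeling (starG n) 1 ψ) :
    ceilSqrt (ψ 0 * (n + 1)) - Nat.sqrt (ψ 0) + 1 ≥ n := by
  obtain ⟨-, hr, L, hL, him⟩ := hψ
  rw [ncard_edgeSet_starG] at him hr
  have hb : ∀ e ∈ (starG n).edgeSet,
      Nat.sqrt (ψ 0) ≤ L e ∧ L e ≤ ceilSqrt (ψ 0 * (n + 1)) := by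
    intro e he
    have he' := he
    rw [edgeSet_starG] at he'
    obtain ⟨i, -, rfl⟩ := he'
    obtain ⟨h1, h2⟩ := hr i.succ
    have hlo : Nat.sqrt (ψ 0) ≤ Nat.sqrt (ψ 0 * ψ i.succ) :=
      Nat.sqrt_le_sqrt (Nat.le_mul_of_pos_right _ h1)
    have hhi : ceilSqrt (ψ 0 * ψ i.succ) ≤ ceilSqrt (ψ 0 * (n + 1)) :=
      ceilSqrt_mono (Nat.mul_le_mul_left _ (by omega))
    have hm := sqrt_le_ceilSqrt (ψ 0 * ψ i.succ)
    rcases hL 0 i.succ he with h | h <;> simp only [h] <;> omega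
  obtain ⟨e₁, he₁, h₁⟩ : 1 ∈ L '' (starG n).edgeSet := by
    rw [him]; exact ⟨le_rfl, by omega⟩
  obtain ⟨e₂, he₂, h₂⟩ : n ∈ L '' (starG n).edgeSet := by
    rw [him]; exact ⟨hn, by omega⟩
  -- `⌊√c⌋ ≤ 1` also keeps the truncated subtraction harmless
  have := (hb e₁ he₁).1
  have := (hb e₂ he₂).2
  omega
end

section
/- For all integers n ≥ 3 and k ≥ 1, the cycle C_n admits a k-geometric mean labeling ψ whose vertex labels all lie in {k, k+1, …, k+n−1}; that is, the largest allowed label k+q = k+n is not used. -/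
/-- The cycle `C n` on `n` vertices (intended for `n ≥ 3`): the path `P n` together with the
edge `u_n u_1`. -/
def cycleG (n : ℕ) : SimpleGraph (Fin n) :=
  SimpleGraph.fromRel (fun u v => v.val = u.val + 1 ∨ (u.val = n - 1 ∧ v.val = 0))

/-- The offset `ψ u - k` at position `i` of the zigzag around the `n`-cycle. At `i = 0` the
truncated subtraction gives the intended value `0`. -/
def zig (n i : ℕ) : ℕ := if 2 * i ≤ n then 2 * i - 1 else 2 * (n - i)

lemma zig_lt {n i : ℕ} (hi : i < n) : zig n i < n := by
  unfold zig; split_ifs <;> omega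

lemma zig_inj {n i j : ℕ} (hi : i < n) (hj : j < n) (h : zig n i = zig n j) : i = j := by
  unfold zig at h; split_ifs at h <;> omega

/-- The unordered pair of offsets `{a, b}` is one of those met along the zigzag. -/
def ZigPair (n a b : ℕ) : Prop :=
  (a + b = 1) ∨ (b = a + 2) ∨ (a = b + 2) ∨ (a + 2 = n ∧ b + 1 = n) ∨ (b + 2 = n ∧ a + 1 = n)

lemma ZigPair.symm {n a b : ℕ} (h : ZigPair n a b) : ZigPair n b a := by
  unfold ZigPair at *; omega

lemma zig_succ {n i j : ℕ} (hn : 3 ≤ n) (hi : i < n) (hj : j < n)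
    (h : j = i + 1 ∨ (i = n - 1 ∧ j = 0)) : ZigPair n (zig n i) (zig n j) := by
  unfold zig ZigPair; split_ifs <;> omega

lemma ceilSqrt_eq {m x : ℕ} (h1 : m * m < x) (h2 : x < (m + 1) * (m + 1)) :
    ceilSqrt x = m + 1 := by
  have h : Nat.sqrt x = m := by
    rw [Nat.eq_sqrt.2 ⟨h1.le, h2⟩]
  unfold ceilSqrt
  rw [h, if_neg h1.ne]

lemma ceilSqrt_add_one {m : ℕ} (hm : 1 ≤ m) : ceilSqrt (m * (m + 1)) = m + 1 :=
  ceilSqrt_eq (by nlinarith) (by nlinarith)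

lemma ceilSqrt_add_two {m : ℕ} (hm : 1 ≤ m) : ceilSqrt (m * (m + 2)) = m + 1 :=
  ceilSqrt_eq (by nlinarith) (by nlinarith)

/-- The label chosen on an edge with end labels `a` and `b`: the floor on the edge `{k, k + 1}`
(recognised by its sum), and the ceiling on every other edge. -/
def lab (k a b : ℕ) : ℕ :=
  if a + b = 2 * k + 1 then Nat.sqrt (a * b) else ceilSqrt (a * b)

lemma lab_comm (k a b : ℕ) : lab k a b = lab k b a := by
  unfold lab; rw [add_comm a b, mul_comm a b]

lemma lab_first (k : ℕ) : lab k k (k + 1) = k := by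
  unfold lab
  rw [if_pos (by omega)]
  exact (Nat.eq_sqrt.2 ⟨by nlinarith, by nlinarith⟩).symm

lemma lab_two {k a : ℕ} (hk : 1 ≤ k) : lab k (k + a) (k + (a + 2)) = k + a + 1 := by
  unfold lab
  rw [if_neg (by omega)]
  exact ceilSqrt_add_two (by omega)

lemma lab_last {k a : ℕ} (hk : 1 ≤ k) (ha : 1 ≤ a) :
    lab k (k + a) (k + (a + 1)) = k + a + 1 := by
  unfold lab
  rw [if_neg (by omega)]
  exact ceilSqrt_add_one (by omega)

lemma lab_mem {n k a b : ℕ} (hn : 3 ≤ n) (hk : 1 ≤ k) (ha : a < n) (hb : b < n)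
    (h : ZigPair n a b) : lab k (k + a) (k + b) ∈ Set.Icc k (k + n - 1) := by
  -- By symmetry of `lab`, only pairs with the smaller offset first need a computation.
  have key : ∀ a b : ℕ, b < n → (a = 0 ∧ b = 1 ∨ b = a + 2 ∨ a + 2 = n ∧ b = a + 1) →
      lab k (k + a) (k + b) ∈ Set.Icc k (k + n - 1) := by
    rintro a b hb (⟨rfl, rfl⟩ | rfl | ⟨h, rfl⟩)
    · rw [add_zero, lab_first, Set.mem_Icc]; omega
    · rw [lab_two hk, Set.mem_Icc]; omega
    · rw [lab_last hk (by omega), Set.mem_Icc]; omega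
  unfold ZigPair at h
  rcases le_total a b with hab | hab
  · exact key a b hb (by omega)
  · rw [lab_comm]; exact key b a ha (by omega)

lemma cycleG_adj {n : ℕ} (hn : 3 ≤ n) (u v : Fin n) : (cycleG n).Adj u v ↔
    (v.val = u.val + 1 ∨ (u.val = n - 1 ∧ v.val = 0)) ∨
    (u.val = v.val + 1 ∨ (v.val = n - 1 ∧ u.val = 0)) := by
  unfold cycleG
  rw [SimpleGraph.fromRel_adj, and_iff_right_iff_imp]
  rintro h rfl
  omega

/-- The cycle has `n` edges: sending a vertex to the edge towards its successor is a bijection. -/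
lemma cycleG_ncard {n : ℕ} (hn : 3 ≤ n) : (cycleG n).edgeSet.ncard = n := by
  let nx : Fin n → Fin n := fun i =>
    ⟨if i.val + 1 < n then i.val + 1 else 0, by split_ifs <;> omega⟩
  have hnx : ∀ i, (nx i).val = if i.val + 1 < n then i.val + 1 else 0 := fun _ => rfl
  have hset : (cycleG n).edgeSet = Set.range (fun i => s(i, nx i)) := by
    ext e
    induction e using Sym2.ind with
    | _ u v =>
      rw [SimpleGraph.mem_edgeSet, cycleG_adj hn, Set.mem_range]
      constructor
      · rintro (h | h)
        · refine ⟨u, ?_⟩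
          have : nx u = v := by ext; rw [hnx]; split_ifs <;> omega
          simp only [this]
        · refine ⟨v, ?_⟩
          have : nx v = u := by ext; rw [hnx]; split_ifs <;> omega
          simp only [this, Sym2.eq_swap]
      · rintro ⟨i, hi⟩
        have h3 := hnx i
        rcases Sym2.eq_iff.1 hi with ⟨h1, h2⟩ | ⟨h1, h2⟩ <;> subst h1 <;> rw [← h2] <;>
          split_ifs at h3 <;> omega
  have hinj : Function.Injective (fun i => s(i, nx i)) := by
    intro i j h
    have h3 := hnx i
    have h4 := hnx j
    rcases Sym2.eq_iff.1 h with ⟨h1, -⟩ | ⟨h1, h2⟩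
    · exact h1
    · rw [Fin.ext_iff] at *
      split_ifs at h3 h4 <;> omega
  rw [hset, ← Set.image_univ, Set.ncard_image_of_injective _ hinj, Set.ncard_univ,
    Nat.card_eq_fintype_card, Fintype.card_fin]

/-- For all integers `n ≥ 3` and `k ≥ 1`, the cycle `C n` admits a `k`-geometric mean
labeling all of whose vertex labels lie in `{k, …, k + n - 1}`; i.e. the largest allowed
label `k + q = k + n` is not used. -/
theorem statement8 (n k : ℕ) (hn : 3 ≤ n) (hk : 1 ≤ k) :
    ∃ ψ : Fin n → ℕ, IsKGeometricMeanLabeling (cycleG n) k ψ ∧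
      ∀ v : Fin n, ψ v ∈ Set.Icc k (k + n - 1) := by
  have hq := cycleG_ncard hn
  have hlt : ∀ v : Fin n, zig n v.val < n := fun v => zig_lt v.isLt
  refine ⟨fun v => k + zig n v.val, ⟨?_, ?_, ?_⟩, ?_⟩
  · intro u v h
    exact Fin.ext (zig_inj u.isLt v.isLt (Nat.add_left_cancel h))
  · intro v
    have := hlt v
    simp only [hq, Set.mem_Icc]; omega
  · refine ⟨Sym2.lift ⟨fun u v => lab k (k + zig n u.val) (k + zig n v.val),
      fun u v => lab_comm _ _ _⟩, ?_, ?_⟩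
    · intro u v _
      simp only [Sym2.lift_mk]
      unfold lab
      split_ifs
      · exact Or.inl rfl
      · exact Or.inr rfl
    rw [hq]
    apply Set.Subset.antisymm
    · rintro _ ⟨e, he, rfl⟩
      induction e using Sym2.ind with
      | _ u v =>
        rw [SimpleGraph.mem_edgeSet, cycleG_adj hn] at he
        simp only [Sym2.lift_mk]
        refine lab_mem hn hk (hlt u) (hlt v) ?_
        rcases he with h | h
        · exact zig_succ hn u.isLt v.isLt h
        · exact (zig_succ hn v.isLt u.isLt h).symm
    · intro x hx
      rw [Set.mem_Icc] at hx
      -- It suffices to find cyclically adjacent positions `i`, `j` carrying the right label.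
      suffices H : ∃ i j : ℕ, ∃ _ : i < n, ∃ _ : j < n,
          ((j = i + 1 ∨ (i = n - 1 ∧ j = 0)) ∨ (i = j + 1 ∨ (j = n - 1 ∧ i = 0))) ∧
          lab k (k + zig n i) (k + zig n j) = x by
        obtain ⟨i, j, hi, hj, h, hl⟩ := H
        exact ⟨s(⟨i, hi⟩, ⟨j, hj⟩), (cycleG_adj hn _ _).2 h, hl⟩
      obtain ⟨t, rfl⟩ := Nat.exists_eq_add_of_le hx.1
      rcases Nat.eq_zero_or_pos t with rfl | ht
      · have h0 : zig n 0 = 0 := by unfold zig; split_ifs <;> omega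
        have h1 : zig n 1 = 1 := by unfold zig; split_ifs <;> omega
        exact ⟨0, 1, by omega, by omega, by omega, by rw [h0, h1]; exact lab_first k⟩
      obtain ⟨a, rfl⟩ : ∃ a, t = a + 1 := ⟨t - 1, by omega⟩
      by_cases hlast : a + 2 = n
      · -- The zigzag turns between positions `n / 2` and `n / 2 + 1`; which of the two holds
        -- the maximum depends on the parity of `n`.
        rcases Nat.even_or_odd' n with ⟨c, hc | hc⟩
        · have h0 : zig n (c + 1) = a := by unfold zig; split_ifs <;> omega
          have h1 : zig n c = a + 1 := by unfold zig; split_ifs <;> omega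
          exact ⟨c + 1, c, by omega, by omega, by omega, by
            rw [h0, h1]; exact lab_last hk (by omega)⟩
        · have h0 : zig n c = a := by unfold zig; split_ifs <;> omega
          have h1 : zig n (c + 1) = a + 1 := by unfold zig; split_ifs <;> omega
          exact ⟨c, c + 1, by omega, by omega, by omega, by
            rw [h0, h1]; exact lab_last hk (by omega)⟩
      · rcases Nat.even_or_odd' a with ⟨c, hc | hc⟩
        · have h1 : zig n (n - c - 1) = a + 2 := by unfold zig; split_ifs <;> omega
          -- Even offset `2 c` sits at position `n - c`, read cyclically when `c = 0`.
          rcases Nat.eq_zero_or_pos c with rfl | hcpos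
          · have h0 : zig n 0 = a := by unfold zig; split_ifs <;> omega
            exact ⟨0, n - 0 - 1, by omega, by omega, by omega, by
              rw [h0, h1]; exact lab_two hk⟩
          · have h0 : zig n (n - c) = a := by unfold zig; split_ifs <;> omega
            exact ⟨n - c, n - c - 1, by omega, by omega, by omega, by
              rw [h0, h1]; exact lab_two hk⟩
        · have h0 : zig n (c + 1) = a := by unfold zig; split_ifs <;> omega
          have h1 : zig n (c + 2) = a + 2 := by unfold zig; split_ifs <;> omega
          exact ⟨c + 1, c + 2, by omega, by omega, by omega, by
            rw [h0, h1]; exact lab_two hk⟩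
  · intro v
    have := hlt v
    simp only [Set.mem_Icc]; omega
end

section
/- For all integers n ≥ 3 and k ≥ 1, the crown C_n ⊙ K_1 is a k-geometric mean graph. -/
/-- The crown `C n ⊙ K 1`: the cycle `C n` on the `inl` vertices, plus a pendant vertex
`inr i` joined to `inl i` for each `i`. -/
def crownG (n : ℕ) : SimpleGraph (Fin n ⊕ Fin n) :=
  SimpleGraph.fromRel (fun a b =>
    match a, b with
    | Sum.inl u, Sum.inl v => v.val = u.val + 1 ∨ (u.val = n - 1 ∧ v.val = 0)
    | Sum.inl u, Sum.inr v => u = v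
    | _, _ => False)

/-- The rank of the `j`-th spoke: `0, 2, 4, …, 5, 3, 1` around the cycle. -/
def rank (n j : ℕ) : ℕ := if 2 * j < n then 2 * j else 2 * n - 1 - 2 * j

/-- The vertex labeling: the spoke of rank `r` carries `k + 2r + 1` on the cycle and `k + 2r` at
its pendant vertex. -/
def vertexLabel (n k : ℕ) : Fin n ⊕ Fin n → ℕ
  | Sum.inl j => k + 2 * rank n j.val + 1
  | Sum.inr j => k + 2 * rank n j.val

/-- The label of an edge whose end values add up to `2k + d`. The value of `d` tells the
kinds of edges apart: `d = 4r + 1` for the spoke of rank `r`, `d = 4` for the edge of ranks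
`{0, 1}`, `d = 4r + 6` for `{r, r + 2}`, and `d = 4n - 4`, which exceeds `4` as `n ≥ 3`, for
`{n - 2, n - 1}`. -/
def edgeLabel (k d : ℕ) : ℕ :=
  if d = 1 then k else if d % 2 = 1 then k + (d + 1) / 2 else if d = 4 then k + 1
  else if d % 4 = 2 then k + (d - 2) / 2 else k + d / 2

lemma edgeLabel_spec (k d : ℕ) :
    (d = 1 ∧ edgeLabel k d = k) ∨ (d ≠ 1 ∧ d % 2 = 1 ∧ edgeLabel k d = k + (d + 1) / 2) ∨
      (d = 4 ∧ edgeLabel k d = k + 1) ∨ (d % 4 = 2 ∧ edgeLabel k d = k + (d - 2) / 2) ∨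
      (d ≠ 4 ∧ d % 4 = 0 ∧ edgeLabel k d = k + d / 2) := by
  unfold edgeLabel
  split_ifs <;> omega

/-- `edgeLabel` as a function on unordered pairs of vertices. -/
def pairLabel (n k : ℕ) : Sym2 (Fin n ⊕ Fin n) → ℕ :=
  Sym2.lift ⟨fun u v => edgeLabel k (vertexLabel n k u + vertexLabel n k v - 2 * k), by
    intro u v; simp only [Nat.add_comm]⟩

/-- The cyclic successor on `Fin n`. -/
def cycNext (n : ℕ) (j : Fin n) : Fin n :=
  if h : j.val + 1 < n then ⟨j.val + 1, h⟩ else ⟨0, by have := j.isLt; omega⟩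

lemma val_cycNext (n : ℕ) (j : Fin n) :
    (j.val + 1 < n ∧ (cycNext n j).val = j.val + 1) ∨
      (j.val + 1 = n ∧ (cycNext n j).val = 0) := by
  have := j.isLt
  by_cases h : j.val + 1 < n
  · exact Or.inl ⟨h, by simp [cycNext, h]⟩
  · exact Or.inr ⟨by omega, by simp [cycNext, h]⟩

/-- Enumeration of the edges: the cycle edge leaving `j` for `inl j`, the spoke at `j` for
`inr j`. -/
def crownEdge (n : ℕ) : Fin n ⊕ Fin n → Sym2 (Fin n ⊕ Fin n)
  | Sum.inl j => s(Sum.inl j, Sum.inl (cycNext n j))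
  | Sum.inr j => s(Sum.inl j, Sum.inr j)

lemma edgeSet_crownG (n : ℕ) (hn : 3 ≤ n) : (crownG n).edgeSet = Set.range (crownEdge n) := by
  ext z
  induction z using Sym2.ind with
  | _ u v =>
  rw [SimpleGraph.mem_edgeSet, crownG, SimpleGraph.fromRel_adj]
  constructor
  · rintro ⟨-, h⟩
    rcases u with u | u <;> rcases v with v | v <;> simp only [or_false, false_or] at h
    · have key : ∀ a b : Fin n, (b.val = a.val + 1 ∨ (a.val = n - 1 ∧ b.val = 0)) →
          cycNext n a = b := by
        intro a b hab
        have := a.isLt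
        have := b.isLt
        have := val_cycNext n a
        apply Fin.ext
        omega
      rcases h with h | h
      · exact ⟨Sum.inl u, by simp only [crownEdge, key u v h]⟩
      · exact ⟨Sum.inl v, by simp only [crownEdge, key v u h, Sym2.eq_swap]⟩
    · exact ⟨Sum.inr u, by simp only [crownEdge, h]⟩
    · exact ⟨Sum.inr v, by simp only [crownEdge, h, Sym2.eq_swap]⟩
  · rintro ⟨j | j, h⟩
    · have hj := j.isLt
      have hne : (Sum.inl j : Fin n ⊕ Fin n) ≠ Sum.inl (cycNext n j) := by
        intro h
        have := congrArg Fin.val (Sum.inl.inj h)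
        have := val_cycNext n j
        omega
      have hrel : (cycNext n j).val = j.val + 1 ∨ (j.val = n - 1 ∧ (cycNext n j).val = 0) := by
        have := val_cycNext n j
        omega
      rcases Sym2.eq_iff.1 h with ⟨rfl, rfl⟩ | ⟨rfl, rfl⟩
      · exact ⟨hne, Or.inl hrel⟩
      · exact ⟨hne.symm, Or.inr hrel⟩
    · rcases Sym2.eq_iff.1 h with ⟨rfl, rfl⟩ | ⟨rfl, rfl⟩
      · exact ⟨by simp, Or.inl rfl⟩
      · exact ⟨by simp, Or.inr rfl⟩

lemma sqrt_ceilSqrt_of_lt {x s : ℕ} (h₁ : s * s < x) (h₂ : x < (s + 1) * (s + 1)) :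
    Nat.sqrt x = s ∧ ceilSqrt x = s + 1 := by
  have h : Nat.sqrt x = s := (Nat.eq_sqrt.2 ⟨h₁.le, h₂⟩).symm
  refine ⟨h, ?_⟩
  rw [ceilSqrt, h, if_neg h₁.ne]

lemma label_options {x y l : ℕ} (hx : 1 ≤ x)
    (h : ((y = x + 1 ∨ y = x + 2) ∧ (l = x ∨ l = x + 1)) ∨
      (y = x + 4 ∧ (l = x + 1 ∨ l = x + 2))) :
    l = Nat.sqrt (x * y) ∨ l = ceilSqrt (x * y) := by
  rcases h with ⟨rfl | rfl, hl⟩ | ⟨rfl, hl⟩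
  · obtain ⟨h₁, h₂⟩ := @sqrt_ceilSqrt_of_lt (x * (x + 1)) x (by nlinarith) (by nlinarith)
    omega
  · obtain ⟨h₁, h₂⟩ := @sqrt_ceilSqrt_of_lt (x * (x + 2)) x (by nlinarith) (by nlinarith)
    omega
  · obtain ⟨h₁, h₂⟩ := @sqrt_ceilSqrt_of_lt (x * (x + 4)) (x + 1) (by nlinarith) (by nlinarith)
    omega

/-- The ranks joined by the cycle edges. -/
lemma rank_cycNext (n : ℕ) (hn : 3 ≤ n) (j : Fin n) :
    let r := rank n j.val
    let s := rank n (cycNext n j).val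
    s = r + 2 ∨ r = s + 2 ∨ (r = 1 ∧ s = 0) ∨ (r + 1 = s ∧ s + 1 = n) ∨ (s + 1 = r ∧ r + 1 = n) := by
  have := val_cycNext n j
  unfold rank
  split_ifs <;> omega

lemma rank_lt (n : ℕ) (j : Fin n) : rank n j.val < n := by
  have := j.isLt
  unfold rank
  split_ifs <;> omega

lemma pairLabel_crownEdge_mem (n k : ℕ) (hn : 3 ≤ n) (e : Fin n ⊕ Fin n) :
    pairLabel n k (crownEdge n e) ∈ Set.Icc k (k + 2 * n - 1) := by
  rcases e with j | j
  · have h := rank_cycNext n hn j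
    have h₁ := rank_lt n j
    have h₂ := rank_lt n (cycNext n j)
    simp only [crownEdge, pairLabel, Sym2.lift_mk, vertexLabel, Set.mem_Icc] at *
    have := edgeLabel_spec k (k + 2 * rank n j.val + 1 + (k + 2 * rank n (cycNext n j).val + 1) - 2 * k)
    omega
  · have h₁ := rank_lt n j
    simp only [crownEdge, pairLabel, Sym2.lift_mk, vertexLabel, Set.mem_Icc] at *
    have := edgeLabel_spec k (k + 2 * rank n j.val + 1 + (k + 2 * rank n j.val) - 2 * k)
    omega

lemma exists_pairLabel_eq (n k m : ℕ) (hn : 3 ≤ n) (hm : m < 2 * n) :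
    ∃ e, pairLabel n k (crownEdge n e) = k + m := by
  -- The offsets `m = 0` and `m ≥ 3` odd are attained on spokes, the others on cycle edges.
  have spoke : ∀ t : ℕ, t < n → (m = 0 ∧ t = 0 ∨ 3 ≤ m ∧ m = 2 * rank n t + 1) →
      ∃ e, pairLabel n k (crownEdge n e) = k + m := by
    intro t ht h
    refine ⟨Sum.inr ⟨t, ht⟩, ?_⟩
    simp only [crownEdge, pairLabel, Sym2.lift_mk, vertexLabel]
    have := edgeLabel_spec k (k + 2 * rank n t + 1 + (k + 2 * rank n t) - 2 * k)
    have h₀ : rank n 0 = 0 := by unfold rank; split_ifs <;> omega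
    rcases h with ⟨rfl, rfl⟩ | h <;> omega
  have cyc : ∀ t : ℕ, t + 1 < n →
      ((∃ r, m = 2 * r + 2 ∧ (rank n t = r ∧ rank n (t + 1) = r + 2 ∨
        rank n t = r + 2 ∧ rank n (t + 1) = r)) ∨
       (m + 2 = 2 * n ∧ rank n t + rank n (t + 1) + 3 = 2 * n)) →
      ∃ e, pairLabel n k (crownEdge n e) = k + m := by
    intro t ht h
    refine ⟨Sum.inl ⟨t, by omega⟩, ?_⟩
    simp only [crownEdge, pairLabel, Sym2.lift_mk, vertexLabel, cycNext, ht, dite_true]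
    have := edgeLabel_spec k (k + 2 * rank n t + 1 + (k + 2 * rank n (t + 1) + 1) - 2 * k)
    rcases h with ⟨r, h⟩ | h <;> omega
  by_cases h₁ : m = 1
  · refine ⟨Sum.inl ⟨n - 1, by omega⟩, ?_⟩
    have h₂ : ¬ (n - 1 + 1 < n) := by omega
    have h₃ : rank n (n - 1) = 1 := by unfold rank; split_ifs <;> omega
    have h₄ : rank n 0 = 0 := by unfold rank; split_ifs <;> omega
    simp only [crownEdge, pairLabel, Sym2.lift_mk, vertexLabel, cycNext, h₂, dite_false,
      h₃, h₄]
    have := edgeLabel_spec k (k + 2 * 1 + 1 + (k + 2 * 0 + 1) - 2 * k)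
    omega
  by_cases h₀ : m = 0
  · exact spoke 0 (by omega) (by omega)
  rcases (by omega : m % 4 = 1 ∨ m % 4 = 3 ∨ m + 2 = 2 * n ∨ (m % 4 = 2 ∧ m + 4 ≤ 2 * n) ∨
      (m % 4 = 0 ∧ m + 4 ≤ 2 * n)) with h | h | h | h | h
  · exact spoke (m / 4) (by omega) (by unfold rank; split_ifs <;> omega)
  · exact spoke (n - 1 - m / 4) (by omega) (by unfold rank; split_ifs <;> omega)
  · exact cyc ((n - 1) / 2) (by omega) (Or.inr ⟨h, by unfold rank; split_ifs <;> omega⟩)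
  · exact cyc (m / 4) (by omega)
      (Or.inl ⟨m / 2 - 1, by omega, by unfold rank; split_ifs <;> omega⟩)
  · exact cyc (n - 1 - m / 4) (by omega)
      (Or.inl ⟨m / 2 - 1, by omega, by unfold rank; split_ifs <;> omega⟩)

lemma image_pairLabel (n k : ℕ) (hn : 3 ≤ n) :
    pairLabel n k '' (crownG n).edgeSet = Set.Icc k (k + 2 * n - 1) := by
  rw [edgeSet_crownG n hn]
  ext l
  constructor
  · rintro ⟨-, ⟨e, rfl⟩, rfl⟩
    exact pairLabel_crownEdge_mem n k hn e
  · rintro ⟨h₁, h₂⟩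
    obtain ⟨e, he⟩ := exists_pairLabel_eq n k (l - k) hn (by omega)
    exact ⟨_, ⟨e, rfl⟩, by omega⟩

lemma ncard_edgeSet_crownG (n : ℕ) (hn : 3 ≤ n) : (crownG n).edgeSet.ncard = 2 * n := by
  apply le_antisymm
  · rw [edgeSet_crownG n hn, ← Set.image_univ]
    refine (Set.ncard_image_le Set.finite_univ).trans ?_
    simp [Set.ncard_univ, two_mul]
  · have h := Set.ncard_image_le (f := pairLabel n 1) (Set.toFinite (crownG n).edgeSet)
    rw [image_pairLabel n 1 hn, ← Finset.coe_Icc, Set.ncard_coe_finset, Nat.card_Icc] at h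
    omega

/-- The value `pairLabel` gives to `s(u, v)` is the floor or the ceiling of the geometric mean of the
two vertex values. -/
def Admissible (n k : ℕ) (u v : Fin n ⊕ Fin n) : Prop :=
  pairLabel n k s(u, v) = Nat.sqrt (vertexLabel n k u * vertexLabel n k v) ∨
    pairLabel n k s(u, v) = ceilSqrt (vertexLabel n k u * vertexLabel n k v)

lemma admissible_of_adj (n k : ℕ) (hn : 3 ≤ n) (hk : 1 ≤ k) (u v : Fin n ⊕ Fin n)
    (h : (crownG n).Adj u v) : Admissible n k u v := by
  have cyc : ∀ j : Fin n, Admissible n k (Sum.inl j) (Sum.inl (cycNext n j)) := by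
    intro j
    have h := rank_cycNext n hn j
    have h' := edgeLabel_spec k
      (k + 2 * rank n j.val + 1 + (k + 2 * rank n (cycNext n j).val + 1) - 2 * k)
    simp only [Admissible, pairLabel, Sym2.lift_mk, vertexLabel] at *
    rcases lt_or_ge (rank n j.val) (rank n (cycNext n j).val) with hlt | hge
    · exact label_options (by omega) (by omega)
    · rw [Nat.mul_comm (k + 2 * rank n j.val + 1)]
      exact label_options (by omega) (by omega)
  have spoke : ∀ j : Fin n, Admissible n k (Sum.inl j) (Sum.inr j) := by
    intro j
    have h' := edgeLabel_spec k (k + 2 * rank n j.val + 1 + (k + 2 * rank n j.val) - 2 * k)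
    simp only [Admissible, pairLabel, Sym2.lift_mk, vertexLabel] at *
    rw [Nat.mul_comm (k + 2 * rank n j.val + 1)]
    exact label_options (by omega) (by omega)
  have symm : ∀ u v, Admissible n k u v → Admissible n k v u := by
    intro u v huv
    rwa [Admissible, Sym2.eq_swap, Nat.mul_comm]
  rw [← SimpleGraph.mem_edgeSet, edgeSet_crownG n hn] at h
  obtain ⟨j | j, he⟩ := h
  · rcases Sym2.eq_iff.1 he with ⟨rfl, rfl⟩ | ⟨rfl, rfl⟩
    · exact cyc j
    · exact symm _ _ (cyc j)
  · rcases Sym2.eq_iff.1 he with ⟨rfl, rfl⟩ | ⟨rfl, rfl⟩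
    · exact spoke j
    · exact symm _ _ (spoke j)

lemma rank_injective (n : ℕ) : Function.Injective (fun j : Fin n => rank n j.val) := by
  intro i j h
  have := i.isLt
  have := j.isLt
  apply Fin.ext
  simp only [rank] at h
  split_ifs at h <;> omega

/-- For all integers `n ≥ 3` and `k ≥ 1`, the crown `C n ⊙ K 1` is a `k`-geometric mean
graph. -/
theorem statement10 (n k : ℕ) (hn : 3 ≤ n) (hk : 1 ≤ k) :
    IsKGeometricMeanGraph (crownG n) k := by
  refine ⟨vertexLabel n k, ?_, ?_, pairLabel n k, admissible_of_adj n k hn hk, ?_⟩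
  · rintro (i | i) (j | j) h <;> simp only [vertexLabel] at h
    · rw [rank_injective n (show rank n i.val = rank n j.val by omega)]
    · omega
    · omega
    · rw [rank_injective n (show rank n i.val = rank n j.val by omega)]
  · rw [ncard_edgeSet_crownG n hn]
    rintro (j | j) <;> have := rank_lt n j <;> simp only [vertexLabel, Set.mem_Icc] <;> omega
  · rw [ncard_edgeSet_crownG n hn, image_pairLabel n k hn]
end

section
/- For all positive integers n and k, the comb P_n ⊙ K_1 is a k-geometric mean graph. In fact, the labeling ψ(u_i) = (k−1) + 2i − 1 and ψ(v_i) = (k−1) + 2i for 1 ≤ i ≤ n is a k-geometric mean labeling, with edge u_i u_{i+1} labeled ⌈√(ψ(u_i)ψ(u_{i+1}))⌉ and edge u_i v_i labeled ⌊√(ψ(u_i)ψ(v_i))⌋. -/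
/-- The comb `P n ⊙ K 1`: the path `P n` on the `inl` vertices, plus a pendant vertex
`inr i` joined to `inl i` for each `i`. -/
def combG (n : ℕ) : SimpleGraph (Fin n ⊕ Fin n) :=
  SimpleGraph.fromRel (fun a b =>
    match a, b with
    | Sum.inl u, Sum.inl v => v.val = u.val + 1
    | Sum.inl u, Sum.inr v => u = v
    | _, _ => False)

/-- The labeling `ψ u_i = (k-1) + 2i - 1`, `ψ v_i = (k-1) + 2i` of the comb (here `0`-indexed:
`ψ (inl i) = k + 2 i`, `ψ (inr i) = k + 2 i + 1`). -/
def combψ (n k : ℕ) : Fin n ⊕ Fin n → ℕ :=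
  Sum.elim (fun i => k + 2 * i.val) (fun i => k + 2 * i.val + 1)

/-- The edge labeling of the comb assigning `⌈√(ψ u_i * ψ u_{i+1})⌉` to the spine edge
`u_i u_{i+1}` and `⌊√(ψ u_i * ψ v_i)⌋` to the pendant edge `u_i v_i`. -/
def combLabel (n k : ℕ) : Sym2 (Fin n ⊕ Fin n) → ℕ :=
  Sym2.lift ⟨fun a b =>
    match a, b with
    | Sum.inl u, Sum.inl v => ceilSqrt ((k + 2 * u.val) * (k + 2 * v.val))
    | Sum.inl u, Sum.inr v => Nat.sqrt ((k + 2 * u.val) * (k + 2 * v.val + 1))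
    | Sum.inr u, Sum.inl v => Nat.sqrt ((k + 2 * v.val) * (k + 2 * u.val + 1))
    | Sum.inr _, Sum.inr _ => 0,
    by rintro (u | u) (v | v) <;> simp [Nat.mul_comm]⟩

lemma sqrt_mul_succ (m : ℕ) : Nat.sqrt (m * (m + 1)) = m := by
  symm
  rw [Nat.eq_sqrt]
  constructor <;> nlinarith

/-- Positivity of `m` makes `m * (m + 2) = (m + 1) ^ 2 - 1` a non-square. -/
lemma ceilSqrt_mul_add_two (m : ℕ) (hm : 1 ≤ m) : ceilSqrt (m * (m + 2)) = m + 1 := by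
  have h : Nat.sqrt (m * (m + 2)) = m := by
    symm
    rw [Nat.eq_sqrt]
    constructor <;> nlinarith
  unfold ceilSqrt
  rw [h, if_neg]
  nlinarith

lemma mem_combG_edgeSet (n : ℕ) (e : Sym2 (Fin n ⊕ Fin n)) :
    e ∈ (combG n).edgeSet ↔ (∃ i : Fin n, e = s(Sum.inl i, Sum.inr i)) ∨
      ∃ i j : Fin n, j.val = i.val + 1 ∧ e = s(Sum.inl i, Sum.inl j) := by
  induction e with | _ a b
  rw [SimpleGraph.mem_edgeSet]
  rcases a with a | a <;> rcases b with b | b <;>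
    simp only [combG, SimpleGraph.fromRel_adj, Sym2.eq_iff] <;> grind

lemma combLabel_pendant (n k : ℕ) (i : Fin n) :
    combLabel n k s(Sum.inl i, Sum.inr i) = k + 2 * i.val := sqrt_mul_succ _

lemma combLabel_spine (n k : ℕ) (hk : 1 ≤ k) (i j : Fin n) (h : j.val = i.val + 1) :
    combLabel n k s(Sum.inl i, Sum.inl j) = k + 2 * i.val + 1 := by
  change ceilSqrt ((k + 2 * i.val) * (k + 2 * j.val)) = _
  rw [h]
  exact ceilSqrt_mul_add_two _ (by omega)

lemma combLabel_injOn (n k : ℕ) (hk : 1 ≤ k) :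
    Set.InjOn (combLabel n k) (combG n).edgeSet := by
  intro e he f hf hef
  rw [mem_combG_edgeSet] at he hf
  rcases he with ⟨i, rfl⟩ | ⟨i, j, hj, rfl⟩ <;> rcases hf with ⟨i', rfl⟩ | ⟨i', j', hj', rfl⟩
  · rw [combLabel_pendant, combLabel_pendant] at hef
    obtain rfl : i = i' := Fin.ext (by omega)
    rfl
  · rw [combLabel_pendant, combLabel_spine n k hk _ _ hj'] at hef
    omega
  · rw [combLabel_pendant, combLabel_spine n k hk _ _ hj] at hef
    omega
  · rw [combLabel_spine n k hk _ _ hj, combLabel_spine n k hk _ _ hj'] at hef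
    obtain rfl : i = i' := Fin.ext (by omega)
    obtain rfl : j = j' := Fin.ext (by omega)
    rfl

lemma combLabel_image (n k : ℕ) (hn : 1 ≤ n) (hk : 1 ≤ k) :
    combLabel n k '' (combG n).edgeSet = Set.Icc k (k + 2 * n - 2) := by
  ext x
  simp only [Set.mem_image, mem_combG_edgeSet, Set.mem_Icc]
  constructor
  · rintro ⟨e, ⟨i, rfl⟩ | ⟨i, j, hj, rfl⟩, rfl⟩
    · rw [combLabel_pendant]
      omega
    · rw [combLabel_spine n k hk _ _ hj]
      omega
  · rintro ⟨h1, h2⟩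
    -- The parity of `x - k` decides between a pendant and a spine edge.
    obtain ⟨t, ht | ht⟩ := Nat.even_or_odd' (x - k)
    · refine ⟨_, Or.inl ⟨⟨t, by omega⟩, rfl⟩, ?_⟩
      rw [combLabel_pendant]
      simp only
      omega
    · refine ⟨_, Or.inr ⟨⟨t, by omega⟩, ⟨t + 1, by omega⟩, rfl, rfl⟩, ?_⟩
      rw [combLabel_spine n k hk _ _ rfl]
      simp only
      omega

lemma ncard_combG_edgeSet (n : ℕ) (hn : 1 ≤ n) : (combG n).edgeSet.ncard = 2 * n - 1 := by
  rw [← (combLabel_injOn n 1 le_rfl).ncard_image, combLabel_image n 1 hn le_rfl,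
    ← Finset.coe_Icc, Set.ncard_coe_finset, Nat.card_Icc]
  omega

/-- For all positive integers `n` and `k`, the comb `P n ⊙ K 1` is a `k`-geometric mean graph;
in fact `combψ` is a `k`-geometric mean labeling of it, realized by the edge labels `combLabel`
(ceiling of the geometric mean on the spine edges `u_i u_{i+1}`, floor on the pendant edges
`u_i v_i`). -/
theorem statement12 (n k : ℕ) (hn : 1 ≤ n) (hk : 1 ≤ k) :
    IsKGeometricMeanGraph (combG n) k ∧
    IsKGeometricMeanLabeling (combG n) k (combψ n k) ∧
    (combLabel n k) '' (combG n).edgeSet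
      = Set.Icc k (k + (combG n).edgeSet.ncard - 1) := by
  have himg : (combLabel n k) '' (combG n).edgeSet
      = Set.Icc k (k + (combG n).edgeSet.ncard - 1) := by
    rw [combLabel_image n k hn hk, ncard_combG_edgeSet n hn]
    congr 1
    omega
  have hlab : IsKGeometricMeanLabeling (combG n) k (combψ n k) := by
    refine ⟨?_, ?_, combLabel n k, ?_, himg⟩
    · rintro (a | a) (b | b) h <;> simp only [combψ, Sum.elim_inl, Sum.elim_inr] at h
      · exact congrArg _ (Fin.ext (by omega))
      · omega
      · omega
      · exact congrArg _ (Fin.ext (by omega))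
    · rw [ncard_combG_edgeSet n hn]
      rintro (a | a) <;> simp only [combψ, Sum.elim_inl, Sum.elim_inr, Set.mem_Icc] <;> omega
    · rintro (a | a) (b | b) h
      · exact Or.inr rfl
      · exact Or.inl rfl
      · left
        change Nat.sqrt _ = Nat.sqrt ((k + 2 * a.val + 1) * (k + 2 * b.val))
        -- Adjacency forces `a = b`, so the two products agree up to commutation.
        rw [← SimpleGraph.mem_edgeSet, mem_combG_edgeSet] at h
        have hab : a = b := by
          simp only [Sym2.eq_iff] at h
          grind
        subst hab
        rw [Nat.mul_comm]
      · exfalso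
        rw [← SimpleGraph.mem_edgeSet, mem_combG_edgeSet] at h
        simp [Sym2.eq_iff] at h
  exact ⟨⟨_, hlab⟩, hlab, himg⟩
end
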